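/- Let G be a finite group acting linearly on the sphere S^n via an orthogonal representation ρ : G → O(n+1), suppose S^n is G-connected and the fixed point set (S^n)^G is the great k-sphere S^k (the intersection of S^n with a (k+1)-dimensional pointwise-fixed linear subspace of ℝ^{n+1}), where 0 < k < n. If k is even, then TC^G(S^n) = 3. -/

import Mathlib

open Set unitInterval

namespace PaperTC

variable {G X : Type*}

/-- The orbit of `x` under the action `act`. -/
def orbit (act : G → X → X) (x : X) : Set X := {y | ∃ g, act g x = y}

/-- The fixed point set of the action `act`. -/
def fixedSet (act : G → X → X) : Set X := {x | ∀ g, act g x = x}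

/-- The fixed point set of a subset `S` of the acting group. -/
def fixedSetOf (act : G → X → X) (S : Set G) : Set X := {x | ∀ g ∈ S, act g x = x}

/-- `minCover P` is the least `k ≥ 1` satisfying `P k`, as an element of `ℕ∞`
(equal to `∞` if there is no such `k`). -/
noncomputable def minCover (P : ℕ → Prop) : ℕ∞ :=
  sInf {k : ℕ∞ | ∃ m : ℕ, k = m ∧ 1 ≤ m ∧ P m}

section Plain

variable (Y : Type*) [TopologicalSpace Y]

/-- `Y × Y` can be covered by `k` open sets each admitting a motion planner. -/
def TCcover (k : ℕ) : Prop :=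
  ∃ U : Fin k → Set (Y × Y),
    (∀ i, IsOpen (U i)) ∧ (⋃ i, U i) = univ ∧
    ∀ i, ∃ s : Y × Y → C(I, Y),
      ContinuousOn s (U i) ∧ ∀ p ∈ U i, s p 0 = p.1 ∧ s p 1 = p.2

/-- Topological complexity (non-reduced, possibly infinite). -/
noncomputable def TC : ℕ∞ := minCover (TCcover Y)

/-- `Y` can be covered by `k` open sets, each of which can be deformed within `Y`
to a point. -/
def catCover (k : ℕ) : Prop :=
  ∃ U : Fin k → Set Y,
    (∀ i, IsOpen (U i)) ∧ (⋃ i, U i) = univ ∧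
    ∀ i, ∃ H : Y × I → Y,
      ContinuousOn H (U i ×ˢ (univ : Set I)) ∧ (∀ x ∈ U i, H (x, 0) = x) ∧
      ∃ y₀, ∀ x ∈ U i, H (x, 1) = y₀

/-- Non-reduced Lusternik–Schnirelmann category. -/
noncomputable def cat : ℕ∞ := minCover (catCover Y)

end Plain

section Equivariant

variable [TopologicalSpace X] (act : G → X → X)

/-- `X × X` can be covered by `k` invariant open sets each admitting an
equivariant motion planner. -/
def eqTCcover (k : ℕ) : Prop :=
  ∃ U : Fin k → Set (X × X),
    (∀ i, IsOpen (U i)) ∧ (⋃ i, U i) = univ ∧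
    ∀ i, (∀ g p, p ∈ U i → (act g p.1, act g p.2) ∈ U i) ∧
      ∃ s : X × X → C(I, X),
        ContinuousOn s (U i) ∧
        (∀ p ∈ U i, s p 0 = p.1 ∧ s p 1 = p.2) ∧
        (∀ g p, p ∈ U i → ∀ t : I, s (act g p.1, act g p.2) t = act g (s p t))

/-- Equivariant topological complexity `TC_G` of Colman and Grant. -/
noncomputable def eqTC : ℕ∞ := minCover (eqTCcover act)

/-- `X × X` can be covered by `k` `(G × G)`-invariant open sets, each admitting a
`(G × G)`-equivariant section of `π^G : P X ×_{X/G} P X → X × X`; such a section is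
recorded by a pair of paths `s₁ p`, `s₂ p`, with the orbit of the endpoint of the first
equal to the orbit of the starting point of the second. -/
def invTCcover (k : ℕ) : Prop :=
  ∃ U : Fin k → Set (X × X),
    (∀ i, IsOpen (U i)) ∧ (⋃ i, U i) = univ ∧
    ∀ i, (∀ g₁ g₂ : G, ∀ p, p ∈ U i → (act g₁ p.1, act g₂ p.2) ∈ U i) ∧
      ∃ s₁ s₂ : X × X → C(I, X),
        ContinuousOn s₁ (U i) ∧ ContinuousOn s₂ (U i) ∧
        (∀ p ∈ U i, s₁ p 0 = p.1 ∧ s₂ p 1 = p.2 ∧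
          orbit act (s₁ p 1) = orbit act (s₂ p 0)) ∧
        (∀ g₁ g₂ : G, ∀ p, p ∈ U i → ∀ t : I,
          s₁ (act g₁ p.1, act g₂ p.2) t = act g₁ (s₁ p t) ∧
          s₂ (act g₁ p.1, act g₂ p.2) t = act g₂ (s₂ p t))

/-- Invariant topological complexity `TC^G` of Lubawski and Marzantowicz. -/
noncomputable def invTC : ℕ∞ := minCover (invTCcover act)

/-- The invariant open set `U` is `G`-compressible into `A`: the inclusion `U ↪ X` is
`G`-equivariantly homotopic to a `G`-map with values in `A`. -/
def GCompressible (A : Set X) (U : Set X) : Prop :=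
  (∀ g x, x ∈ U → act g x ∈ U) ∧
  ∃ H : X × I → X,
    ContinuousOn H (U ×ˢ (univ : Set I)) ∧ (∀ x ∈ U, H (x, 0) = x) ∧
    (∀ g x, x ∈ U → ∀ t : I, H (act g x, t) = act g (H (x, t))) ∧
    (∀ x ∈ U, H (x, 1) ∈ A)

/-- A `G`-categorical set: compressible into a single orbit. -/
def GCategorical (U : Set X) : Prop :=
  ∃ x₀ : X, GCompressible act (orbit act x₀) U

/-- `X` can be covered by `k` open `G`-categorical sets. -/
def catGCover (k : ℕ) : Prop :=
  ∃ U : Fin k → Set X,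
    (∀ i, IsOpen (U i)) ∧ (⋃ i, U i) = univ ∧ ∀ i, GCategorical act (U i)

/-- Equivariant Lusternik–Schnirelmann category `cat_G`. -/
noncomputable def catG : ℕ∞ := minCover (catGCover act)

/-- `X` can be covered by `k` open sets `G`-compressible into `{star}`. -/
def pointedCatGCover (star : X) (k : ℕ) : Prop :=
  ∃ U : Fin k → Set X,
    (∀ i, IsOpen (U i)) ∧ (⋃ i, U i) = univ ∧
    ∀ i, GCompressible act {star} (U i)

/-- The pointed equivariant category `_{{⋆}}cat_G(X)`. -/
noncomputable def pointedCatG (star : X) : ℕ∞ := minCover (pointedCatGCover act star)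

/-- `X` is `G`-contractible: the identity is `G`-homotopic to a map with values in a
single orbit. -/
def GContractible : Prop :=
  ∃ H : X × I → X,
    Continuous H ∧ (∀ x, H (x, 0) = x) ∧
    (∀ g x, ∀ t : I, H (act g x, t) = act g (H (x, t))) ∧
    ∃ x₀ : X, ∀ x, H (x, 1) ∈ orbit act x₀

end Equivariant

/-- The orbit space `X/G` with the quotient topology. -/
abbrev OrbitSpace (act : G → X → X) : Type _ := Quot (fun x y => ∃ g, act g x = y)

end PaperTC
namespace PaperTC

/-- The unit sphere `S^n ⊆ ℝ^{n+1}` (with the Euclidean metric). -/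
abbrev Sph (n : ℕ) : Set (EuclideanSpace ℝ (Fin (n + 1))) := Metric.sphere 0 1

/-- The action of `G` on the unit sphere `S^n` obtained by restricting an orthogonal
representation of `G` on `ℝ^{n+1}`. -/
noncomputable def sphereAct {G : Type*} [Monoid G] {n : ℕ}
    (ρ : G →* (EuclideanSpace ℝ (Fin (n + 1)) ≃ₗᵢ[ℝ] EuclideanSpace ℝ (Fin (n + 1)))) :
    G → ↥(Sph n) → ↥(Sph n) := fun g x =>
  ⟨ρ g x, mem_sphere_zero_iff_norm.mpr (by
    rw [(ρ g).norm_map]; exact mem_sphere_zero_iff_norm.mp x.2)⟩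

end PaperTC

open PaperTC

/-!
Upper bound: if `a` is a fixed point of a linear action on the sphere, then the complement of `-a`
is compressed equivariantly into `a` along great circles, and the square of such a set carries an
invariant motion planner. Three of these squares cover, since a pair of points meets at most two
of the antipodes `-a`.

Lower bound: an invariant motion planner restricts to an ordinary one on the fixed point set, which
is the unit sphere of a space `V` of odd dimension. Two motion planners covering all pairs of points
of this sphere extend to families `H₀`, `H₁` of paths in `V` such that `H₀ (p, s)` and `H₁ (p, t)`
never vanish simultaneously for a pair `p` of unit vectors. With straight chords as paths, the
simultaneous zeros are exactly `p = (x, -x)`, `s = t = 1/2`, and since `dim V` is odd the Jacobian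
determinant of the corresponding map is nonnegative near them. The integral of a suitably cut off
Jacobian determinant is invariant under compactly supported perturbations, so the zeros cannot all
disappear when the chords are deformed into `H₀` and `H₁`.
-/

namespace PaperTC

section JacobianIntegral

open MeasureTheory

lemma continuous_det_fderiv {E : Type*} [NormedAddCommGroup E] [NormedSpace ℝ E] {f : E → E}
    (hf : ContDiff ℝ 1 f) : Continuous fun x => (fderiv ℝ f x).det :=
  ContinuousLinearMap.continuous_det.comp (hf.continuous_fderiv (by norm_num))

variable {ι : Type*} [Fintype ι] [DecidableEq ι]

/-- The partial derivative of `f : ℝ^ι → ℝ` in the `j`-th coordinate direction. -/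
noncomputable def partialDeriv (j : ι) (f : (ι → ℝ) → ℝ) (x : ι → ℝ) : ℝ :=
  fderiv ℝ f x (Pi.single j 1)

lemma contDiff_partialDeriv {n : ℕ} {f : (ι → ℝ) → ℝ} (hf : ContDiff ℝ (n + 1) f) (j : ι) :
    ContDiff ℝ n (partialDeriv j f) :=
  (hf.fderiv_right le_rfl).clm_apply contDiff_const

lemma continuous_partialDeriv {f : (ι → ℝ) → ℝ} (hf : ContDiff ℝ 1 f) (j : ι) :
    Continuous (partialDeriv j f) :=
  (contDiff_partialDeriv (n := 0) (by simpa using hf) j).continuous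

lemma partialDeriv_comm {f : (ι → ℝ) → ℝ} (hf : ContDiff ℝ 2 f) (i j : ι) (x : ι → ℝ) :
    partialDeriv i (partialDeriv j f) x = partialDeriv j (partialDeriv i f) x := by
  have hdiff : DifferentiableAt ℝ (fderiv ℝ f) x :=
    (hf.fderiv_right (m := 1) (by norm_num)).differentiable (by norm_num) x
  have hsnd (a b : ι) : partialDeriv a (partialDeriv b f) x =
      fderiv ℝ (fderiv ℝ f) x (Pi.single a 1) (Pi.single b 1) := by
    unfold partialDeriv
    rw [fderiv_clm_apply hdiff (by fun_prop)]
    simp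
  rw [hsnd, hsnd, (hf.contDiffAt.isSymmSndFDerivAt (by simp)).eq]

omit [Fintype ι] in
lemma partialDeriv_finsetProd [Finite ι] {κ : Type*} [DecidableEq κ] {s : Finset κ}
    {u : κ → (ι → ℝ) → ℝ} (hu : ∀ l ∈ s, Differentiable ℝ (u l)) (j : ι) (x : ι → ℝ) :
    partialDeriv j (fun y => ∏ l ∈ s, u l y) x =
      ∑ l ∈ s, (∏ i ∈ s.erase l, u i x) * partialDeriv j (u l) x := by
  have := Fintype.ofFinite ι
  unfold partialDeriv
  rw [fderiv_finsetProd fun l hl => hu l hl x]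
  simp

lemma integral_partialDeriv_mul {f g : (ι → ℝ) → ℝ} (hf : ContDiff ℝ 1 f) (hg : ContDiff ℝ 1 g)
    (hf_supp : HasCompactSupport f) (j : ι) :
    ∫ x, partialDeriv j f x * g x = -∫ x, f x * partialDeriv j g x := by
  have hfg := integral_mul_fderiv_eq_neg_fderiv_mul_of_integrable (v := Pi.single j 1)
    (((continuous_partialDeriv hf j).mul hg.continuous).integrable_of_hasCompactSupport
      (μ := volume) (hf_supp.fderiv_apply ℝ _).mul_right)
    ((hf.continuous.mul (continuous_partialDeriv hg j)).integrable_of_hasCompactSupport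
      hf_supp.mul_right)
    ((hf.continuous.mul hg.continuous).integrable_of_hasCompactSupport hf_supp.mul_right)
    (fun x _ => hf.differentiable (by norm_num) x) (fun x _ => hg.differentiable (by norm_num) x)
  rw [eq_neg_iff_add_eq_zero, ← neg_eq_iff_add_eq_zero]
  exact hfg.symm

omit [Fintype ι] in
lemma partialDeriv_apply [Finite ι] {f : (ι → ℝ) → ι → ℝ} {x : ι → ℝ}
    (hf : DifferentiableAt ℝ f x) (i j : ι) :
    partialDeriv j (fun y => f y i) x = fderiv ℝ f x (Pi.single j 1) i := by
  have := Fintype.ofFinite ι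
  rw [partialDeriv, fderiv_apply hf]
  rfl

lemma det_fderiv_eq_sum_perm {f : (ι → ℝ) → ι → ℝ} {x : ι → ℝ} (hf : DifferentiableAt ℝ f x) :
    (fderiv ℝ f x).det = ∑ τ : Equiv.Perm ι,
      (Equiv.Perm.sign τ : ℝ) * ∏ i, partialDeriv (τ i) (fun y => f y i) x := by
  rw [ContinuousLinearMap.det, ← LinearMap.det_toMatrix', ← Matrix.det_transpose,
    Matrix.det_apply']
  refine Finset.sum_congr rfl fun τ _ => congrArg _ (Finset.prod_congr rfl fun i _ => ?_)
  rw [partialDeriv_apply hf, Matrix.transpose_apply, LinearMap.toMatrix'_apply]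
  rfl

/-- Piola's identity: the rows of the cofactor matrix of a Jacobian matrix are divergence free. -/
lemma sum_sign_mul_partialDeriv_prod_erase_eq_zero {f : (ι → ℝ) → ι → ℝ} (hf : ContDiff ℝ 2 f)
    (i₀ : ι) (x : ι → ℝ) :
    ∑ τ : Equiv.Perm ι, (Equiv.Perm.sign τ : ℝ) * partialDeriv (τ i₀)
      (fun y => ∏ i ∈ Finset.univ.erase i₀, partialDeriv (τ i) (fun y => f y i) y) x = 0 := by
  have hfi (i : ι) : ContDiff ℝ 2 fun y => f y i := contDiff_pi.1 hf i
  have hdiff (i j : ι) : Differentiable ℝ (partialDeriv j fun y => f y i) :=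
    (contDiff_partialDeriv (n := 1) (by exact_mod_cast hfi i) j).differentiable (by norm_num)
  simp_rw [partialDeriv_finsetProd fun i _ => hdiff i _, Finset.mul_sum]
  rw [Finset.sum_comm]
  refine Finset.sum_eq_zero fun l hl => ?_
  have hli₀ : i₀ ≠ l := (Finset.ne_of_mem_erase hl).symm
  -- Composing `τ` with the transposition of `i₀` and `l` exchanges the two derivatives of `f_l`.
  refine Finset.sum_involution (fun τ _ => τ * Equiv.swap i₀ l) (fun τ _ => ?_) (fun τ _ _ => ?_)
    (fun _ _ => Finset.mem_univ _) (fun τ _ => ?_)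
  · have hprod : ∏ i ∈ (Finset.univ.erase i₀).erase l,
        partialDeriv ((τ * Equiv.swap i₀ l) i) (fun y => f y i) x =
        ∏ i ∈ (Finset.univ.erase i₀).erase l, partialDeriv (τ i) (fun y => f y i) x := by
      refine Finset.prod_congr rfl fun i hi => ?_
      simp only [Finset.mem_erase] at hi
      rw [Equiv.Perm.mul_apply, Equiv.swap_apply_of_ne_of_ne hi.2.1 hi.1]
    rw [hprod, Equiv.Perm.mul_apply, Equiv.Perm.mul_apply, Equiv.swap_apply_left,
      Equiv.swap_apply_right, partialDeriv_comm (hfi l) (τ l), Equiv.Perm.sign_mul,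
      Equiv.Perm.sign_swap hli₀]
    simp
  · simpa [mul_eq_left, Equiv.swap_eq_one_iff] using hli₀
  · rw [mul_assoc, Equiv.swap_mul_self, mul_one]

omit [DecidableEq ι] in
lemma integral_det_fderiv_eq_zero {f : (ι → ℝ) → ι → ℝ} (hf : ContDiff ℝ 2 f) {i₀ : ι}
    (hi₀ : HasCompactSupport fun x => f x i₀) : ∫ x, (fderiv ℝ f x).det = 0 := by
  classical
  have hfi (i : ι) : ContDiff ℝ 2 fun y => f y i := contDiff_pi.1 hf i
  have hfi₀ : ContDiff ℝ 1 fun x => f x i₀ := (hfi i₀).of_le (by norm_num)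
  set P : Equiv.Perm ι → (ι → ℝ) → ℝ := fun τ x =>
    ∏ i ∈ Finset.univ.erase i₀, partialDeriv (τ i) (fun y => f y i) x with hP
  have hP_diff (τ : Equiv.Perm ι) : ContDiff ℝ 1 (P τ) := contDiff_prod fun i _ =>
    contDiff_partialDeriv (n := 1) (by exact_mod_cast hfi i) (τ i)
  have hdet (x : ι → ℝ) : (fderiv ℝ f x).det = ∑ τ : Equiv.Perm ι,
      (Equiv.Perm.sign τ : ℝ) * (partialDeriv (τ i₀) (fun y => f y i₀) x * P τ x) := by
    rw [det_fderiv_eq_sum_perm (hf.differentiable (by norm_num) x)]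
    refine Finset.sum_congr rfl fun τ _ => congrArg _ ?_
    exact (Finset.mul_prod_erase _ (fun i => partialDeriv (τ i) _ x) (Finset.mem_univ i₀)).symm
  have hint₁ (τ : Equiv.Perm ι) :
      Integrable fun x => partialDeriv (τ i₀) (fun y => f y i₀) x * P τ x :=
    ((continuous_partialDeriv hfi₀ _).mul (hP_diff τ).continuous).integrable_of_hasCompactSupport
      (hi₀.fderiv_apply ℝ _).mul_right
  have hint₂ (τ : Equiv.Perm ι) : Integrable fun x => f x i₀ * partialDeriv (τ i₀) (P τ) x :=
    (hfi₀.continuous.mul (continuous_partialDeriv (hP_diff τ) _)).integrable_of_hasCompactSupport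
      hi₀.mul_right
  calc ∫ x, (fderiv ℝ f x).det
      = ∑ τ : Equiv.Perm ι, (Equiv.Perm.sign τ : ℝ) *
          ∫ x, partialDeriv (τ i₀) (fun y => f y i₀) x * P τ x := by
        simp_rw [hdet, integral_finsetSum _ fun τ _ => (hint₁ τ).const_mul _, integral_const_mul]
    _ = -∫ x, f x i₀ * ∑ τ : Equiv.Perm ι,
          (Equiv.Perm.sign τ : ℝ) * partialDeriv (τ i₀) (P τ) x := by
        simp_rw [integral_partialDeriv_mul hfi₀ (hP_diff _) hi₀, Finset.mul_sum,
          mul_left_comm (f _ i₀),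
          integral_finsetSum _ fun τ _ => (hint₂ τ).const_mul _, integral_const_mul, mul_neg,
          Finset.sum_neg_distrib]
    _ = 0 := by simp [hP, sum_sign_mul_partialDeriv_prod_erase_eq_zero hf]

omit [Fintype ι] [DecidableEq ι] in
lemma det_eq_zero_of_forall_apply_eq_zero [Finite ι] {K : Type*} [Field K]
    {A : (ι → K) →ₗ[K] ι → K} {i : ι} (hA : ∀ v, A v i = 0) : LinearMap.det A = 0 := by
  classical
  have := Fintype.ofFinite ι
  rw [← LinearMap.det_toMatrix']
  exact Matrix.det_eq_zero_of_row_eq_zero i fun j => by simp [LinearMap.toMatrix'_apply, hA]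

omit [DecidableEq ι] in
lemma integrable_det_fderiv {f : (ι → ℝ) → ι → ℝ} (hf : ContDiff ℝ 1 f) {i₀ : ι}
    (hi₀ : HasCompactSupport fun x => f x i₀) : Integrable fun x => (fderiv ℝ f x).det := by
  classical
  refine (continuous_det_fderiv hf).integrable_of_hasCompactSupport ?_
  refine (hi₀.fderiv ℝ).mono fun x hx => ?_
  contrapose! hx
  rw [Function.notMem_support] at hx ⊢
  refine det_eq_zero_of_forall_apply_eq_zero (i := i₀) fun v => ?_
  have hv := DFunLike.congr_fun hx v
  rwa [fderiv_apply (hf.differentiable (by norm_num) x)] at hv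

lemma contDiff_update {n : WithTop ℕ∞} {f : (ι → ℝ) → ι → ℝ} {v : (ι → ℝ) → ℝ}
    (hf : ContDiff ℝ n f) (hv : ContDiff ℝ n v) (i₀ : ι) :
    ContDiff ℝ n fun x => Function.update (f x) i₀ (v x) := by
  refine contDiff_pi.2 fun i => ?_
  rcases eq_or_ne i i₀ with rfl | hi
  · simpa using hv
  · simpa [hi] using contDiff_pi.1 hf i

lemma toMatrix'_fderiv_update {f : (ι → ℝ) → ι → ℝ} {v : (ι → ℝ) → ℝ} {x : ι → ℝ}
    (hf : ContDiff ℝ 1 f) (hv : ContDiff ℝ 1 v) (i₀ : ι) :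
    LinearMap.toMatrix' (fderiv ℝ (fun y => Function.update (f y) i₀ (v y)) x : (ι → ℝ) →ₗ[ℝ] _) =
      (LinearMap.toMatrix' (fderiv ℝ f x : (ι → ℝ) →ₗ[ℝ] _)).updateRow i₀
        fun j => partialDeriv j v x := by
  ext i j
  rw [LinearMap.toMatrix'_apply, ContinuousLinearMap.coe_coe,
    ← partialDeriv_apply ((contDiff_update hf hv i₀).differentiable (by norm_num) x)]
  rcases eq_or_ne i i₀ with rfl | hi
  · simp
  · simp [hi, partialDeriv_apply (hf.differentiable (by norm_num) x)]

lemma det_fderiv_update_sub {f : (ι → ℝ) → ι → ℝ} {v w : (ι → ℝ) → ℝ} (hf : ContDiff ℝ 1 f)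
    (hv : ContDiff ℝ 1 v) (hw : ContDiff ℝ 1 w) (i₀ : ι) (x : ι → ℝ) :
    (fderiv ℝ (fun y => Function.update (f y) i₀ (v y - w y)) x).det =
      (fderiv ℝ (fun y => Function.update (f y) i₀ (v y)) x).det -
        (fderiv ℝ (fun y => Function.update (f y) i₀ (w y)) x).det := by
  have hvw : (fun j => partialDeriv j (fun y => v y - w y) x) =
      (fun j => partialDeriv j v x) + (-1 : ℝ) • fun j => partialDeriv j w x := by
    ext j
    rw [partialDeriv, fderiv_fun_sub (hv.differentiable (by norm_num) x)
      (hw.differentiable (by norm_num) x)]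
    simp [partialDeriv, sub_eq_add_neg]
  simp_rw [ContinuousLinearMap.det, ← LinearMap.det_toMatrix', toMatrix'_fderiv_update hf hv,
    toMatrix'_fderiv_update hf hw, toMatrix'_fderiv_update hf (hv.sub hw), hvw,
    Matrix.det_updateRow_add, Matrix.det_updateRow_smul]
  ring

lemma integrable_det_fderiv_update_sub {f : (ι → ℝ) → ι → ℝ} {v w : (ι → ℝ) → ℝ}
    (hf : ContDiff ℝ 1 f) (hv : ContDiff ℝ 1 v) (hw : ContDiff ℝ 1 w)
    (hvw : HasCompactSupport fun x => v x - w x) (i₀ : ι) :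
    Integrable fun x => (fderiv ℝ (fun y => Function.update (f y) i₀ (v y)) x).det -
      (fderiv ℝ (fun y => Function.update (f y) i₀ (w y)) x).det := by
  simp_rw [← det_fderiv_update_sub hf hv hw]
  exact integrable_det_fderiv (contDiff_update hf (hv.sub hw) i₀) (i₀ := i₀) (by simpa using hvw)

lemma integral_det_fderiv_update_sub {f : (ι → ℝ) → ι → ℝ} {v w : (ι → ℝ) → ℝ}
    (hf : ContDiff ℝ 2 f) (hv : ContDiff ℝ 2 v) (hw : ContDiff ℝ 2 w)
    (hvw : HasCompactSupport fun x => v x - w x) (i₀ : ι) :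
    ∫ x, ((fderiv ℝ (fun y => Function.update (f y) i₀ (v y)) x).det -
      (fderiv ℝ (fun y => Function.update (f y) i₀ (w y)) x).det) = 0 := by
  simp_rw [← det_fderiv_update_sub (hf.of_le one_le_two) (hv.of_le one_le_two)
    (hw.of_le one_le_two)]
  exact integral_det_fderiv_eq_zero (contDiff_update hf (hv.sub hw) i₀) (i₀ := i₀)
    (by simpa using hvw)

lemma contDiff_piecewise {n : WithTop ℕ∞} {f g : (ι → ℝ) → ι → ℝ} (hf : ContDiff ℝ n f)
    (hg : ContDiff ℝ n g) (s : Finset ι) : ContDiff ℝ n fun x => s.piecewise (f x) (g x) := by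
  refine contDiff_pi.2 fun i => ?_
  by_cases hi : i ∈ s
  · simpa [hi] using contDiff_pi.1 hf i
  · simpa [hi] using contDiff_pi.1 hg i

omit [DecidableEq ι] in
theorem integral_det_fderiv_sub_det_fderiv {f g : (ι → ℝ) → ι → ℝ} (hf : ContDiff ℝ 2 f)
    (hg : ContDiff ℝ 2 g) (hfg : HasCompactSupport (f - g)) :
    ∫ x, ((fderiv ℝ f x).det - (fderiv ℝ g x).det) = 0 := by
  classical
  -- Replace the coordinates of `g` by those of `f` one at a time.
  let J : Finset ι → (ι → ℝ) → ℝ := fun s x =>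
    (fderiv ℝ (fun y => s.piecewise (f y) (g y)) x).det
  suffices h : ∀ s, Integrable (fun x => J s x - J ∅ x) ∧ ∫ x, (J s x - J ∅ x) = 0 by
    simpa [J] using (h Finset.univ).2
  intro s
  induction s using Finset.induction_on with
  | empty => simp
  | insert i s hi ih =>
    have hs : ContDiff ℝ 2 fun x => s.piecewise (f x) (g x) := contDiff_piecewise hf hg s
    have hfi : ContDiff ℝ 2 fun x => f x i := contDiff_pi.1 hf i
    have hgi : ContDiff ℝ 2 fun x => g x i := contDiff_pi.1 hg i
    have hsupp : HasCompactSupport fun x => f x i - g x i :=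
      hfg.comp_left (g := fun v : ι → ℝ => v i) rfl
    have hJ_insert : J (insert i s) = fun x =>
        (fderiv ℝ (fun y => Function.update (s.piecewise (f y) (g y)) i (f y i)) x).det := by
      simp only [J, Finset.piecewise_insert]
    have hJ : J s = fun x =>
        (fderiv ℝ (fun y => Function.update (s.piecewise (f y) (g y)) i (g y i)) x).det := by
      have hupdate (y : ι → ℝ) : Function.update (s.piecewise (f y) (g y)) i (g y i) =
          s.piecewise (f y) (g y) := by
        rw [Function.update_eq_self_iff, Finset.piecewise_eq_of_notMem _ _ _ hi]
      simp only [J, hupdate]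
    have hint : Integrable fun x => J (insert i s) x - J s x := by
      rw [hJ_insert, hJ]
      exact integrable_det_fderiv_update_sub (hs.of_le one_le_two) (hfi.of_le one_le_two)
        (hgi.of_le one_le_two) hsupp i
    have hzero : ∫ x, (J (insert i s) x - J s x) = 0 := by
      rw [hJ_insert, hJ]
      exact integral_det_fderiv_update_sub hs hfi hgi hsupp i
    have htelescope (x : ι → ℝ) : J (insert i s) x - J ∅ x =
        (J (insert i s) x - J s x) + (J s x - J ∅ x) := (sub_add_sub_cancel _ _ _).symm
    simp_rw [htelescope]
    exact ⟨hint.add ih.1, by rw [integral_add hint ih.1, hzero, ih.2, add_zero]⟩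

end JacobianIntegral

section ZeroPersistence

open MeasureTheory Filter Topology

lemma exists_contDiff_deriv_pos {ε : ℝ} (hε : 0 < ε) : ∃ r : ℝ → ℝ, ContDiff ℝ 2 r ∧
    (∀ t, |t| < ε → 0 < deriv r t) ∧ ∀ t, ε ≤ |t| → deriv r t = 0 := by
  let b : ContDiffBump (0 : ℝ) := ⟨ε / 2, ε, half_pos hε, half_lt_self hε⟩
  have hderiv : ∀ t, HasDerivAt (fun t => ∫ u in (0 : ℝ)..t, b u) (b t) t := fun t =>
    (b.continuous.integral_hasStrictDerivAt 0 t).hasDerivAt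
  refine ⟨fun t => ∫ u in (0 : ℝ)..t, b u, ?_, fun t ht => ?_, fun t ht => ?_⟩
  · rw [show (2 : WithTop ℕ∞) = 1 + 1 by norm_num, contDiff_succ_iff_deriv]
    refine ⟨fun t => (hderiv t).differentiableAt, by simp, ?_⟩
    rw [funext fun t => (hderiv t).deriv]
    exact b.contDiff
  · rw [(hderiv t).deriv]
    exact b.pos_of_mem_ball (by simpa using ht)
  · rw [(hderiv t).deriv]
    exact b.zero_of_le_dist (by simpa [Real.dist_eq] using ht)

section Pi

variable {ι : Type*} [Fintype ι]

lemma exists_contDiff_det_fderiv_pos {ε : ℝ} (hε : 0 < ε) : ∃ R : (ι → ℝ) → ι → ℝ,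
    ContDiff ℝ 2 R ∧ (∀ v, ‖v‖ < ε → 0 < (fderiv ℝ R v).det) ∧
      ∀ v, ε ≤ ‖v‖ → (fderiv ℝ R v).det = 0 := by
  obtain ⟨r, hr, hr_pos, hr_zero⟩ := exists_contDiff_deriv_pos hε
  have hdet (v : ι → ℝ) : (fderiv ℝ (fun v i => r (v i)) v).det = ∏ i, deriv r (v i) := by
    have hfderiv : HasFDerivAt (fun (v : ι → ℝ) i => r (v i)) (ContinuousLinearMap.pi fun i =>
        (fderiv ℝ r (v i)).comp (ContinuousLinearMap.proj i)) v :=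
      hasFDerivAt_pi.2 fun i =>
        (hr.differentiable (by norm_num) (v i)).hasFDerivAt.comp v (hasFDerivAt_apply i v)
    rw [hfderiv.fderiv, ContinuousLinearMap.det_pi]
    simp [ContinuousLinearMap.det, LinearMap.det_ring]
  refine ⟨fun v i => r (v i), contDiff_pi.2 fun i => hr.comp (contDiff_apply ℝ ℝ i),
    fun v hv => ?_, fun v hv => ?_⟩
  · rw [hdet]
    exact Finset.prod_pos fun i _ => hr_pos _ ((norm_le_pi_norm v i).trans_lt hv)
  · have hcoord : ∃ i, ε ≤ ‖v i‖ := by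
      contrapose! hv
      exact (pi_norm_lt_iff hε).2 hv
    obtain ⟨i, hi⟩ := hcoord
    rw [hdet]
    exact Finset.prod_eq_zero (Finset.mem_univ i) (hr_zero _ hi)

lemma det_fderiv_comp {E : Type*} [NormedAddCommGroup E] [NormedSpace ℝ E] {R F : E → E}
    {x : E} (hR : DifferentiableAt ℝ R (F x)) (hF : DifferentiableAt ℝ F x) :
    (fderiv ℝ (R ∘ F) x).det = (fderiv ℝ R (F x)).det * (fderiv ℝ F x).det := by
  rw [fderiv_comp x hR hF]
  exact LinearMap.det_comp _ _

lemma det_fderiv_eq_zero_of_norm_lt {F F' : (ι → ℝ) → ι → ℝ} (hF : ContDiff ℝ 2 F)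
    (hF' : ContDiff ℝ 2 F') (hsupp : HasCompactSupport (F' - F)) {ε : ℝ} (hε : 0 < ε)
    (hF'_norm : ∀ x ∈ tsupport (F' - F), ε ≤ ‖F' x‖)
    (hF_nonneg : ∀ x ∈ tsupport (F' - F), ‖F x‖ < ε → 0 ≤ (fderiv ℝ F x).det)
    {x : ι → ℝ} (hx : x ∈ tsupport (F' - F)) (hFx : ‖F x‖ < ε) : (fderiv ℝ F x).det = 0 := by
  classical
  obtain ⟨R, hR, hR_pos, hR_zero⟩ := exists_contDiff_det_fderiv_pos (ι := ι) hε
  -- `D` is nonnegative with integral zero, hence zero.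
  let D : (ι → ℝ) → ℝ := fun x => (fderiv ℝ (R ∘ F) x).det - (fderiv ℝ (R ∘ F') x).det
  have hDiff {f : (ι → ℝ) → ι → ℝ} (hf : ContDiff ℝ 2 f) : Differentiable ℝ f :=
    hf.differentiable (by norm_num)
  have hD_on : ∀ x ∈ tsupport (F' - F),
      D x = (fderiv ℝ R (F x)).det * (fderiv ℝ F x).det := fun x hx => by
    simp only [D]
    rw [det_fderiv_comp (hDiff hR _) (hDiff hF x), det_fderiv_comp (hDiff hR _) (hDiff hF' x),
      hR_zero _ (hF'_norm x hx), zero_mul, sub_zero]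
  have hcomp : ∀ x ∉ tsupport (F' - F), R ∘ F =ᶠ[𝓝 x] R ∘ F' := fun x hx => by
    filter_upwards [notMem_tsupport_iff_eventuallyEq.1 hx] with y hy
    rw [Function.comp_apply, Function.comp_apply, sub_eq_zero.1 hy]
  have hD_off : ∀ x ∉ tsupport (F' - F), D x = 0 := fun x hx => by
    simp only [D, (hcomp x hx).fderiv_eq, sub_self]
  have hD_nonneg : 0 ≤ D := fun x => by
    by_cases hx : x ∈ tsupport (F' - F)
    · rcases lt_or_ge ‖F x‖ ε with hlt | hge
      · exact (mul_nonneg (hR_pos _ hlt).le (hF_nonneg x hx hlt)).trans_eq (hD_on x hx).symm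
      · simp [hD_on x hx, hR_zero _ hge]
    · exact (hD_off x hx).ge
  have hD_cont : Continuous D :=
    (continuous_det_fderiv ((hR.comp hF).of_le (by norm_num))).sub
      (continuous_det_fderiv ((hR.comp hF').of_le (by norm_num)))
  have hD_supp : HasCompactSupport D := HasCompactSupport.intro hsupp fun x => hD_off x
  have hcomp_supp : HasCompactSupport (R ∘ F - R ∘ F') := HasCompactSupport.intro hsupp
    fun x hx => sub_eq_zero.2 (hcomp x hx).eq_of_nhds
  by_contra hne
  have hDx : D x ≠ 0 := hD_on x hx ▸ mul_ne_zero (hR_pos _ hFx).ne' hne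
  exact (hD_cont.integral_pos_of_hasCompactSupport_nonneg_nonzero hD_supp hD_nonneg hDx).ne'
    (integral_det_fderiv_sub_det_fderiv (hR.comp hF) (hR.comp hF') hcomp_supp)

end Pi

variable {E : Type*} [NormedAddCommGroup E] [NormedSpace ℝ E] [FiniteDimensional ℝ E]

lemma exists_contDiff_le_norm {F G : E → E} (hF : ContDiff ℝ 2 F) (hG : Continuous G) {ε : ℝ}
    (hε : 0 < ε) (hG_norm : ∀ x ∈ tsupport (G - F), 2 * ε ≤ ‖G x‖) :
    ∃ F' : E → E, ContDiff ℝ 2 F' ∧ Function.support (F' - F) ⊆ Function.support (G - F) ∧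
      ∀ x ∈ tsupport (G - F), ε ≤ ‖F' x‖ := by
  obtain ⟨P, hP, hP_dist, hP_supp⟩ := (hG.sub hF.continuous).exists_contDiff_approx 2
    (ε := fun _ => ε) continuous_const fun _ => hε
  refine ⟨F + P, hF.add (by exact_mod_cast hP), by simpa using hP_supp, fun x hx => ?_⟩
  have hclose : ‖G x - (F x + P x)‖ < ε := by
    rw [← dist_eq_norm, dist_comm]
    simpa [dist_eq_norm, add_comm, sub_sub_eq_add_sub] using hP_dist x
  have htri := norm_sub_norm_le (G x) (F x + P x)
  have hGx := hG_norm x hx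
  rw [Pi.add_apply]
  linarith

lemma exists_zero_of_hasCompactSupport_sub_pi {ι : Type*} [Fintype ι] {F G : (ι → ℝ) → ι → ℝ}
    (hF : ContDiff ℝ 2 F) (hG : Continuous G) (hFG : HasCompactSupport (G - F))
    (hnonneg : ∀ x, F x = 0 → ∀ᶠ y in 𝓝 x, 0 ≤ (fderiv ℝ F y).det) {x₀ : ι → ℝ} (hx₀ : F x₀ = 0)
    (hne : ∃ᶠ y in 𝓝 x₀, (fderiv ℝ F y).det ≠ 0) : ∃ x, G x = 0 := by
  by_contra! hG_ne
  have hbad : IsClosed {x | ¬ ∀ᶠ y in 𝓝 x, 0 ≤ (fderiv ℝ F y).det} :=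
    isOpen_setOfPred_eventually_nhds.isClosed_compl
  obtain ⟨ε₁, hε₁, hG_norm⟩ := hFG.isCompact.exists_forall_le' hG.norm.continuousOn
    fun x _ => norm_pos_iff.2 (hG_ne x)
  obtain ⟨ε₂, hε₂, hF_norm⟩ := (hFG.isCompact.inter_right hbad).exists_forall_le'
    hF.continuous.norm.continuousOn fun x hx => norm_pos_iff.2 fun h0 => hx.2 (hnonneg x h0)
  set ε := min (ε₁ / 2) ε₂
  have hε : 0 < ε := lt_min (half_pos hε₁) hε₂
  obtain ⟨F', hF', hsupp, hF'_norm⟩ := exists_contDiff_le_norm hF hG hε fun x hx => by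
    linarith [hG_norm x hx, min_le_left (ε₁ / 2) ε₂]
  have htsupp : tsupport (F' - F) ⊆ tsupport (G - F) := closure_mono hsupp
  have hF_nonneg : ∀ x ∈ tsupport (F' - F), ‖F x‖ < ε → 0 ≤ (fderiv ℝ F x).det := by
    intro x hx hFx
    by_contra hneg
    have hx_bad : ¬ ∀ᶠ y in 𝓝 x, 0 ≤ (fderiv ℝ F y).det := fun h => hneg h.self_of_nhds
    exact (hFx.trans_le (min_le_right _ _)).not_ge (hF_norm x ⟨htsupp hx, hx_bad⟩)
  have hnear : ∀ᶠ y in 𝓝 x₀, y ∈ Function.support (G - F) ∧ ‖F y‖ < ε :=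
    ((hG.sub hF.continuous).isOpen_support.eventually_mem (by simp [hx₀, hG_ne])).and
      (hF.continuous.norm.continuousAt.eventually_lt_const (by simpa [hx₀] using hε))
  obtain ⟨y, hdet, hyG, hFy⟩ := (hne.and_eventually hnear).exists
  have hyF' : y ∈ Function.support (F' - F) := fun h =>
    (hF'_norm y (subset_tsupport _ hyG)).not_gt (by rwa [sub_eq_zero.1 h])
  exact hdet (det_fderiv_eq_zero_of_norm_lt hF hF' (hFG.mono hsupp) hε
    (fun x hx => hF'_norm x (htsupp hx)) hF_nonneg (subset_tsupport _ hyF') hFy)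

lemma det_fderiv_conj {E E' : Type*} [NormedAddCommGroup E] [NormedSpace ℝ E]
    [NormedAddCommGroup E'] [NormedSpace ℝ E'] {F : E → E}
    (e : E ≃L[ℝ] E') {x : E} (hF : DifferentiableAt ℝ F x) :
    (fderiv ℝ (e ∘ F ∘ e.symm) (e x)).det = (fderiv ℝ F x).det := by
  have hF' : HasFDerivAt F (fderiv ℝ F x) (e.symm (e x)) := by
    simpa using hF.hasFDerivAt
  rw [(e.hasFDerivAt.comp (e x) (hF'.comp (e x) e.symm.hasFDerivAt)).fderiv]
  exact LinearMap.det_conj _ e.toLinearEquiv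

/-- This takes the place of the homotopy invariance of the mapping degree. -/
theorem exists_zero_of_hasCompactSupport_sub {F G : E → E} (hF : ContDiff ℝ 2 F)
    (hG : Continuous G) (hFG : HasCompactSupport (G - F))
    (hnonneg : ∀ x, F x = 0 → ∀ᶠ y in 𝓝 x, 0 ≤ (fderiv ℝ F y).det) {x₀ : E} (hx₀ : F x₀ = 0)
    (hne : ∃ᶠ y in 𝓝 x₀, (fderiv ℝ F y).det ≠ 0) : ∃ x, G x = 0 := by
  let e : E ≃L[ℝ] (Fin (Module.finrank ℝ E) → ℝ) := .ofFinrankEq (by simp)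
  have hdet (v : Fin (Module.finrank ℝ E) → ℝ) :
      (fderiv ℝ (e ∘ F ∘ e.symm) v).det = (fderiv ℝ F (e.symm v)).det := by
    simpa using det_fderiv_conj e (hF.differentiable (by norm_num) (e.symm v))
  have hsupp : HasCompactSupport (e ∘ G ∘ e.symm - e ∘ F ∘ e.symm) := by
    convert (hFG.comp_homeomorph e.symm.toHomeomorph).comp_left (g := e) (map_zero e) using 1
    ext v
    simp
  have hnonneg' (v : Fin (Module.finrank ℝ E) → ℝ) (hv : (e ∘ F ∘ e.symm) v = 0) :
      ∀ᶠ w in 𝓝 v, 0 ≤ (fderiv ℝ (e ∘ F ∘ e.symm) w).det := by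
    simp_rw [hdet]
    exact e.symm.continuous.continuousAt.eventually (hnonneg _ (by simpa using hv))
  have hne' : ∃ᶠ w in 𝓝 (e x₀), (fderiv ℝ (e ∘ F ∘ e.symm) w).det ≠ 0 := by
    simp_rw [hdet]
    exact e.continuous.continuousAt.frequently (by simpa using hne)
  obtain ⟨v, hv⟩ := exists_zero_of_hasCompactSupport_sub_pi
    (e.contDiff.comp (hF.comp e.symm.contDiff)) (e.continuous.comp (hG.comp e.symm.continuous))
    hsupp hnonneg' (by simpa using hx₀) hne'
  exact ⟨e.symm v, by simpa using hv⟩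

end ZeroPersistence

section BlockDeterminant

/-- The linear map `(x, y) ↦ ((1 - s) x + s y, (1 - t) x + t y)`. -/
def affineCombos {R : Type*} [CommRing R] (M : Type*) [AddCommGroup M] [Module R M] (s t : R) :
    M × M →ₗ[R] M × M :=
  (((1 - s) • LinearMap.id).coprod (s • LinearMap.id)).prod
    (((1 - t) • LinearMap.id).coprod (t • LinearMap.id))

@[simp]
lemma affineCombos_apply {R M : Type*} [CommRing R] [AddCommGroup M] [Module R M] (s t : R)
    (p : M × M) : affineCombos M s t p = ((1 - s) • p.1 + s • p.2, (1 - t) • p.1 + t • p.2) := rfl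

variable {R M N : Type*} [CommRing R] [AddCommGroup M] [Module R M] [Module.Free R M]
  [Module.Finite R M] [AddCommGroup N] [Module R N] [Module.Free R N] [Module.Finite R N]

/-- Schur's formula with upper right block `B = A ∘ₗ X`, so that `X` stands for `A⁻¹ B`. -/
lemma det_coprod_comp_prod_coprod (A : M →ₗ[R] M) (X : N →ₗ[R] M) (C : M →ₗ[R] N)
    (D : N →ₗ[R] N) : LinearMap.det ((A.coprod (A ∘ₗ X)).prod (C.coprod D)) =
      LinearMap.det A * LinearMap.det (D - C ∘ₗ X) := by
  classical
  let b := Module.Free.chooseBasis R M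
  let c := Module.Free.chooseBasis R N
  have hblocks : LinearMap.toMatrix (b.prod c) (b.prod c)
      ((A.coprod (A ∘ₗ X)).prod (C.coprod D)) =
      Matrix.fromBlocks (LinearMap.toMatrix b b A) 0 (LinearMap.toMatrix b c C)
        (LinearMap.toMatrix c c (D - C ∘ₗ X)) *
      Matrix.fromBlocks 1 (LinearMap.toMatrix c b X) 0 1 := by
    rw [Matrix.fromBlocks_multiply]
    simp only [Matrix.mul_one, Matrix.mul_zero, add_zero,
      ← LinearMap.toMatrix_comp, map_sub, add_sub_cancel]
    ext (i | i) (j | j) <;> simp [LinearMap.toMatrix_apply]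
  rw [← LinearMap.det_toMatrix (b.prod c), hblocks, Matrix.det_mul, Matrix.det_fromBlocks_zero₁₂,
    Matrix.det_fromBlocks_zero₂₁, LinearMap.det_toMatrix, LinearMap.det_toMatrix]
  simp only [Matrix.det_one, mul_one]

lemma det_eq_apply_mul_apply_sub (L : R × R →ₗ[R] R × R) : LinearMap.det L =
    (L (1, 0)).1 * (L (0, 1)).2 - (L (0, 1)).1 * (L (1, 0)).2 := by
  rw [← LinearMap.det_toMatrix (Module.Basis.finTwoProd R), Matrix.det_fin_two]
  simp [LinearMap.toMatrix_apply]

lemma det_affineCombos (s t : R) :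
    LinearMap.det (affineCombos M s t) = (t - s) ^ Module.finrank R M := by
  have hshear : LinearMap.det (((LinearMap.id : M →ₗ[R] M).coprod (LinearMap.id ∘ₗ 0)).prod
      ((-LinearMap.id : M →ₗ[R] M).coprod LinearMap.id)) = 1 := by
    rw [det_coprod_comp_prod_coprod]
    simp
  have hfactor : affineCombos M s t =
      (LinearMap.id.coprod (LinearMap.id ∘ₗ (s • LinearMap.id))).prod
        (LinearMap.id.coprod (t • LinearMap.id)) ∘ₗ
      (LinearMap.id.coprod (LinearMap.id ∘ₗ 0)).prod ((-LinearMap.id).coprod LinearMap.id) := by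
    ext p <;> simp [sub_smul, ← sub_eq_add_neg]
  rw [hfactor, LinearMap.det_comp, hshear, det_coprod_comp_prod_coprod]
  simp [← sub_smul]

end BlockDeterminant

section ChordMap

open Filter Topology Module
open scoped RealInnerProductSpace

variable {V : Type*} [NormedAddCommGroup V] [InnerProductSpace ℝ V]

/-- The map whose zeros are the pairs `(x, y)` of unit vectors together with parameters `s`, `t` at
which the chord from `x` to `y` passes through the origin. The signs of the last two components
are chosen so that its Jacobian determinant is nonnegative near the zeros in odd dimensions. -/
def chordMap (z : (V × V) × (ℝ × ℝ)) : (V × V) × (ℝ × ℝ) :=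
  (affineCombos V z.2.1 z.2.2 z.1, (1 - ‖z.1.1‖ ^ 2, ‖z.1.2‖ ^ 2 - 1))

lemma contDiff_chordMap {n : WithTop ℕ∞} : ContDiff ℝ n (chordMap (V := V)) := by
  have hnorm {f : (V × V) × (ℝ × ℝ) → V} (hf : ContDiff ℝ n f) :
      ContDiff ℝ n fun z => ‖f z‖ ^ 2 := hf.norm_sq ℝ
  unfold chordMap
  simp only [affineCombos_apply]
  fun_prop (disch := assumption)

lemma fderiv_chordMap (x y : V) (s t : ℝ) :
    (fderiv ℝ chordMap ((x, y), (s, t)) : (V × V) × (ℝ × ℝ) →ₗ[ℝ] (V × V) × (ℝ × ℝ)) =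
      ((affineCombos V s t).coprod ((LinearMap.toSpanSingleton ℝ V (y - x)).prodMap
        (LinearMap.toSpanSingleton ℝ V (y - x)))).prod
      ((((-2 : ℝ) • innerₛₗ ℝ x).prodMap ((2 : ℝ) • innerₛₗ ℝ y)).coprod 0) := by
  set z : (V × V) × (ℝ × ℝ) := ((x, y), (s, t))
  let fstPair := ContinuousLinearMap.fst ℝ (V × V) (ℝ × ℝ)
  let sndPair := ContinuousLinearMap.snd ℝ (V × V) (ℝ × ℝ)
  have hx : HasFDerivAt (fun z : (V × V) × (ℝ × ℝ) => z.1.1) _ z :=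
    ((ContinuousLinearMap.fst ℝ V V).comp fstPair).hasFDerivAt
  have hy : HasFDerivAt (fun z : (V × V) × (ℝ × ℝ) => z.1.2) _ z :=
    ((ContinuousLinearMap.snd ℝ V V).comp fstPair).hasFDerivAt
  have hs : HasFDerivAt (fun z : (V × V) × (ℝ × ℝ) => z.2.1) _ z :=
    ((ContinuousLinearMap.fst ℝ ℝ ℝ).comp sndPair).hasFDerivAt
  have ht : HasFDerivAt (fun z : (V × V) × (ℝ × ℝ) => z.2.2) _ z :=
    ((ContinuousLinearMap.snd ℝ ℝ ℝ).comp sndPair).hasFDerivAt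
  have hchord : HasFDerivAt chordMap _ z :=
    ((((hs.const_sub 1).smul hx).add (hs.smul hy)).prodMk
      (((ht.const_sub 1).smul hx).add (ht.smul hy))).prodMk
      ((hx.norm_sq.const_sub 1).prodMk (hy.norm_sq.sub_const 1))
  refine LinearMap.ext fun v => ?_
  rw [hchord.fderiv]
  refine Prod.ext (Prod.ext ?_ ?_) (Prod.ext ?_ ?_) <;>
    simp [z, fstPair, sndPair, smul_sub] <;> abel

variable [FiniteDimensional ℝ V]

lemma det_fderiv_chordMap (hV : 0 < finrank ℝ V) (x y : V) (s t : ℝ) :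
    (fderiv ℝ chordMap ((x, y), (s, t))).det =
      4 * (t - s) ^ (finrank ℝ V - 1) * (⟪x, x - y⟫ * ⟪y, y - x⟫) := by
  have hcont : Continuous fun t : ℝ => (fderiv ℝ chordMap ((x, y), (s, t))).det :=
    (continuous_det_fderiv contDiff_chordMap).comp (by fun_prop)
  -- By continuity in `t` it suffices to treat the case `s ≠ t`.
  refine congrFun (hcont.ext_on (dense_compl_singleton s)
    (g := fun t => 4 * (t - s) ^ (finrank ℝ V - 1) * (⟪x, x - y⟫ * ⟪y, y - x⟫)) (by fun_prop)
    fun t hts => ?_) t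
  replace hts : t - s ≠ 0 := sub_ne_zero.2 hts
  let w := LinearMap.toSpanSingleton ℝ V (y - x)
  let X : ℝ × ℝ →ₗ[ℝ] V × V := (t - s)⁻¹ •
    ((w ∘ₗ (t • LinearMap.fst ℝ ℝ ℝ - s • LinearMap.snd ℝ ℝ ℝ)).prod
      (w ∘ₗ ((t - 1) • LinearMap.fst ℝ ℝ ℝ + (1 - s) • LinearMap.snd ℝ ℝ ℝ)))
  have hX : affineCombos V s t ∘ₗ X = w.prodMap w := by
    refine LinearMap.ext fun p => Prod.ext ?_ ?_ <;>
      simp only [X, w, LinearMap.comp_apply, LinearMap.smul_apply, LinearMap.prod_apply,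
        Function.prod_apply, LinearMap.sub_apply, LinearMap.add_apply, LinearMap.fst_apply,
        LinearMap.snd_apply, LinearMap.toSpanSingleton_apply, Prod.smul_mk, affineCombos_apply,
        LinearMap.prodMap_apply, smul_eq_mul] <;>
      match_scalars <;> field_simp <;> ring
  obtain ⟨m, hm⟩ := Nat.exists_eq_add_one.2 hV
  change LinearMap.det (fderiv ℝ chordMap ((x, y), (s, t))).toLinearMap = _
  rw [fderiv_chordMap, ← hX, det_coprod_comp_prod_coprod, det_affineCombos,
    det_eq_apply_mul_apply_sub, ← neg_sub y x, inner_neg_right, hm, Nat.add_sub_cancel, pow_succ]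
  simp only [X, w, LinearMap.comp_apply, LinearMap.smul_apply, LinearMap.prod_apply,
    Function.prod_apply, LinearMap.sub_apply, LinearMap.add_apply, LinearMap.fst_apply,
    LinearMap.snd_apply, LinearMap.toSpanSingleton_apply, Prod.smul_mk, LinearMap.prodMap_apply,
    LinearMap.neg_apply, zero_sub, Prod.neg_mk, innerₛₗ_apply_apply, inner_smul_right, smul_eq_mul]
  field_simp
  ring

end ChordMap

section ChordZeros

open Filter Topology Module
open scoped RealInnerProductSpace

variable {V : Type*} [NormedAddCommGroup V]

lemma eq_half_of_smul_add_smul_eq_zero [NormedSpace ℝ V] {x y : V} {c : ℝ} (hx : ‖x‖ = 1)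
    (hy : ‖y‖ = 1) (h : (1 - c) • x + c • y = 0) : c = 1 / 2 := by
  have hnorm := congrArg norm (eq_neg_of_add_eq_zero_left h)
  rw [norm_neg, norm_smul, norm_smul, hx, hy, mul_one, mul_one, Real.norm_eq_abs,
    Real.norm_eq_abs, abs_eq_abs] at hnorm
  rcases hnorm with h | h <;> linarith

lemma eq_neg_of_smul_add_smul_eq_zero [NormedSpace ℝ V] {x y : V} {c : ℝ} (hx : ‖x‖ = 1)
    (hy : ‖y‖ = 1) (h : (1 - c) • x + c • y = 0) : y = -x := by
  rw [eq_half_of_smul_add_smul_eq_zero hx hy h, sub_half, ← smul_add,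
    smul_eq_zero_iff_right (by norm_num)] at h
  exact eq_neg_of_add_eq_zero_right h

lemma mem_Icc_of_homotopy_eq_zero [NormedSpace ℝ V] {x y h : V} {θ s : ℝ}
    (hx : ‖x‖ = 1) (hy : ‖y‖ = 1) (hθ : θ ∈ Icc (0 : ℝ) 1) (hs₀ : s ≤ 0 → h = x)
    (hs₁ : 1 ≤ s → h = y)
    (hzero : (1 - s) • x + s • y + θ • (h - ((1 - s) • x + s • y)) = 0) : s ∈ Icc (0 : ℝ) 1 := by
  by_contra hs
  rcases lt_or_ge s 0 with hs' | hs'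
  · have hcoeff : (1 - θ) * s = 1 / 2 := by
      refine eq_half_of_smul_add_smul_eq_zero hx hy ?_
      rw [← hzero, hs₀ hs'.le]
      module
    nlinarith [hθ.2]
  · have hs'' : 1 < s := not_le.1 fun h => hs ⟨hs', h⟩
    have hcoeff : (1 - θ) * s + θ = 1 / 2 := by
      refine eq_half_of_smul_add_smul_eq_zero hx hy ?_
      rw [← hzero, hs₁ hs''.le]
      module
    nlinarith [hθ.2]

variable [InnerProductSpace ℝ V]

lemma snd_chordMap_eq_zero_iff {z : (V × V) × (ℝ × ℝ)} :
    (chordMap z).2 = 0 ↔ ‖z.1.1‖ = 1 ∧ ‖z.1.2‖ = 1 := by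
  simp only [chordMap, Prod.mk_eq_zero, sub_eq_zero, eq_comm (a := (1 : ℝ)),
    pow_eq_one_iff_of_nonneg (norm_nonneg _) two_ne_zero]

lemma eq_of_chordMap_eq_zero {x y : V} {s t : ℝ} (h : chordMap ((x, y), (s, t)) = 0) :
    ‖x‖ = 1 ∧ y = -x ∧ s = 1 / 2 ∧ t = 1 / 2 := by
  obtain ⟨hx, hy⟩ := snd_chordMap_eq_zero_iff.1 (congrArg Prod.snd h)
  have hs : (1 - s) • x + s • y = 0 := congrArg (·.1.1) h
  have ht : (1 - t) • x + t • y = 0 := congrArg (·.1.2) h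
  exact ⟨hx, eq_neg_of_smul_add_smul_eq_zero hx hy hs, eq_half_of_smul_add_smul_eq_zero hx hy hs,
    eq_half_of_smul_add_smul_eq_zero hx hy ht⟩

lemma chordMap_antipodal {x : V} (hx : ‖x‖ = 1) : chordMap ((x, -x), (1 / 2, 1 / 2)) = 0 := by
  norm_num [chordMap, hx]

lemma inner_mul_inner_antipodal {x : V} (hx : ‖x‖ = 1) : ⟪x, x - -x⟫ * ⟪-x, -x - x⟫ = 4 := by
  have hxx : ⟪x, x⟫ = 1 := inner_self_eq_one_of_norm_eq_one hx
  rw [sub_neg_eq_add, sub_eq_add_neg, inner_add_right, inner_add_right, inner_neg_neg, hxx]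
  norm_num

variable [FiniteDimensional ℝ V]

lemma eventually_det_fderiv_chordMap_nonneg (hV : Odd (finrank ℝ V)) {z : (V × V) × (ℝ × ℝ)}
    (hz : chordMap z = 0) : ∀ᶠ w in 𝓝 z, 0 ≤ (fderiv ℝ chordMap w).det := by
  obtain ⟨⟨x, y⟩, s, t⟩ := z
  obtain ⟨hx, rfl, -, -⟩ := eq_of_chordMap_eq_zero hz
  have hcont : Continuous fun w : (V × V) × (ℝ × ℝ) =>
      ⟪w.1.1, w.1.1 - w.1.2⟫ * ⟪w.1.2, w.1.2 - w.1.1⟫ := by fun_prop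
  have hpos : (0 : ℝ) < ⟪x, x - -x⟫ * ⟪-x, -x - x⟫ := by
    rw [inner_mul_inner_antipodal hx]
    exact zero_lt_four
  filter_upwards [hcont.continuousAt.eventually_const_lt hpos] with w hw
  rw [det_fderiv_chordMap hV.pos]
  exact mul_nonneg (mul_nonneg zero_le_four ((hV.tsub_odd odd_one).pow_nonneg _)) hw.le

lemma frequently_det_fderiv_chordMap_ne_zero (hV : 0 < finrank ℝ V) {x : V} (hx : ‖x‖ = 1)
    (s : ℝ) : ∃ᶠ w in 𝓝 ((x, -x), (s, s)), (fderiv ℝ chordMap w).det ≠ 0 := by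
  have hline : Tendsto (fun t : ℝ => ((x, -x), (s, t))) (𝓝[≠] s) (𝓝 ((x, -x), (s, s))) :=
    Continuous.tendsto' (by fun_prop) _ _ rfl |>.mono_left nhdsWithin_le_nhds
  refine hline.frequently (Eventually.frequently ?_)
  filter_upwards [self_mem_nhdsWithin] with t ht
  rw [det_fderiv_chordMap hV, inner_mul_inner_antipodal hx]
  have := pow_ne_zero (finrank ℝ V - 1) (sub_ne_zero.2 ht)
  positivity

/-- A continuous family of paths in `X`, with a path from `p.1` to `p.2` for each pair `p`. The time
parameter is real: the paths are constant before time `0` and after time `1`. -/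
structure IsPathFamily {X : Type*} [TopologicalSpace X] (H : (X × X) × ℝ → X) : Prop where
  continuous : Continuous H
  apply_of_nonpos : ∀ p, ∀ t ≤ 0, H (p, t) = p.1
  apply_of_one_le : ∀ p t, 1 ≤ t → H (p, t) = p.2

theorem exists_common_zero_of_isPathFamily (hV : Odd (finrank ℝ V)) {H₀ H₁ : (V × V) × ℝ → V}
    (hH₀ : IsPathFamily H₀) (hH₁ : IsPathFamily H₁) :
    ∃ p : V × V, ‖p.1‖ = 1 ∧ ‖p.2‖ = 1 ∧ ∃ s ∈ Icc (0 : ℝ) 1, ∃ t ∈ Icc (0 : ℝ) 1,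
      H₀ (p, s) = 0 ∧ H₁ (p, t) = 0 := by
  have : Nontrivial V := finrank_pos_iff.1 hV.pos
  obtain ⟨v, hv⟩ := exists_norm_eq V zero_le_one
  obtain ⟨θ, hθ_one, -, hθ_supp, hθ_mem⟩ := exists_continuous_one_zero_of_isCompact
    (((isCompact_sphere (0 : V) 1).prod (isCompact_sphere (0 : V) 1)).prod
      ((isCompact_Icc (a := (0 : ℝ)) (b := 1)).prod (isCompact_Icc (a := (0 : ℝ)) (b := 1))))
    isClosed_empty (disjoint_empty _)
  -- `G` agrees with `chordMap` off the support of `θ`, and all its zeros lie where `θ = 1`.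
  let G : (V × V) × (ℝ × ℝ) → (V × V) × (ℝ × ℝ) := fun z => chordMap z +
    θ z • (((H₀ (z.1, z.2.1), H₁ (z.1, z.2.2)), (chordMap z).2) - chordMap z)
  have hchord : Continuous (chordMap (V := V)) := (contDiff_chordMap (n := 0)).continuous
  have hG : Continuous G := by
    have := hH₀.continuous
    have := hH₁.continuous
    fun_prop
  have hG_supp : HasCompactSupport (G - chordMap) := by
    refine hθ_supp.mono fun z hz => ?_
    contrapose! hz
    simp_all [G]
  obtain ⟨⟨⟨x, y⟩, s, t⟩, hz⟩ := exists_zero_of_hasCompactSupport_sub contDiff_chordMap hG hG_supp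
    (fun z => eventually_det_fderiv_chordMap_nonneg hV) (chordMap_antipodal hv)
    (frequently_det_fderiv_chordMap_ne_zero hV.pos hv _)
  obtain ⟨hx, hy⟩ := snd_chordMap_eq_zero_iff.1 (by simpa [G] using congrArg Prod.snd hz)
  have hs : (1 - s) • x + s • y +
      θ ((x, y), (s, t)) • (H₀ ((x, y), s) - ((1 - s) • x + s • y)) = 0 := congrArg (·.1.1) hz
  have ht : (1 - t) • x + t • y +
      θ ((x, y), (s, t)) • (H₁ ((x, y), t) - ((1 - t) • x + t • y)) = 0 := congrArg (·.1.2) hz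
  have hs_mem := mem_Icc_of_homotopy_eq_zero hx hy (hθ_mem _) (hH₀.apply_of_nonpos _ s)
    (hH₀.apply_of_one_le _ s) hs
  have ht_mem := mem_Icc_of_homotopy_eq_zero hx hy (hθ_mem _) (hH₁.apply_of_nonpos _ t)
    (hH₁.apply_of_one_le _ t) ht
  have hz_mem : ((x, y), (s, t)) ∈ (Metric.sphere (0 : V) 1 ×ˢ Metric.sphere (0 : V) 1) ×ˢ
      (Icc (0 : ℝ) 1 ×ˢ Icc (0 : ℝ) 1) :=
    ⟨⟨mem_sphere_zero_iff_norm.2 hx, mem_sphere_zero_iff_norm.2 hy⟩, hs_mem, ht_mem⟩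
  rw [hθ_one hz_mem, Pi.one_apply, one_smul, add_sub_cancel] at hs ht
  exact ⟨(x, y), hx, hy, s, hs_mem, t, ht_mem, hs, ht⟩

end ChordZeros

section MotionPlanners

open Topology Module

lemma exists_isPathFamily_extension {E Y : Type*} [NormedAddCommGroup E] [NormedSpace ℝ E]
    [FiniteDimensional ℝ E] [TopologicalSpace Y] {e : Y → E × E} (he : IsClosedEmbedding e)
    (γ : C(Y × I, E)) (hγ_zero : ∀ y, γ (y, 0) = (e y).1) (hγ_one : ∀ y, γ (y, 1) = (e y).2) :
    ∃ H : (E × E) × ℝ → E, IsPathFamily H ∧ ∀ y (t : I), H (e y, t) = γ (y, t) := by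
  obtain ⟨Γ, hΓ⟩ := ContinuousMap.exists_extension' (he.prodMap (IsClosedEmbedding.id (X := I))) γ
  replace hΓ : ∀ y t, Γ (e y, t) = γ (y, t) := fun y t => congrFun hΓ (y, t)
  let proj : ℝ → I := projIcc 0 1 zero_le_one
  have hproj : Continuous proj := continuous_projIcc
  refine ⟨fun q => Γ (q.1, proj q.2) + (1 - (proj q.2 : ℝ)) • (q.1.1 - Γ (q.1, 0)) +
    (proj q.2 : ℝ) • (q.1.2 - Γ (q.1, 1)),
    ⟨by fun_prop, fun p t ht => ?_, fun p t ht => ?_⟩, fun y t => ?_⟩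
  · simp [show proj t = 0 from projIcc_of_le_left _ ht]
  · simp [show proj t = 1 from projIcc_of_right_le _ ht]
  · simp [show proj t = t from projIcc_val _ t, hΓ, hγ_zero, hγ_one]

lemma exists_isPathFamily_of_motionPlanner {E : Type*} [NormedAddCommGroup E] [NormedSpace ℝ E]
    [FiniteDimensional ℝ E] {S : Set E} (hS : IsClosed S) {A : Set (S × S)} (hA : IsClosed A)
    {s : S × S → C(I, S)} (hs : ContinuousOn s A) (hs_ends : ∀ p ∈ A, s p 0 = p.1 ∧ s p 1 = p.2) :
    ∃ H : (E × E) × ℝ → E, IsPathFamily H ∧ ∀ p ∈ A, ∀ t ∈ I, H ((p.1, p.2), t) ∈ S := by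
  have he : IsClosedEmbedding fun p : A => ((p.1.1 : E), (p.1.2 : E)) :=
    (hS.isClosedEmbedding_subtypeVal.prodMap hS.isClosedEmbedding_subtypeVal).comp
      hA.isClosedEmbedding_subtypeVal
  let s_restrict : C(A, C(I, S)) := ⟨A.domRestrict s, hs.domRestrict⟩
  obtain ⟨H, hH, hH_eq⟩ := exists_isPathFamily_extension he
    ⟨fun q => (s_restrict.uncurry q : E), by fun_prop⟩
    (fun p => congrArg Subtype.val (hs_ends p p.2).1)
    (fun p => congrArg Subtype.val (hs_ends p p.2).2)
  refine ⟨H, hH, fun p hp t ht => ?_⟩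
  rw [hH_eq ⟨p, hp⟩ ⟨t, ht⟩]
  exact (s p ⟨t, ht⟩).2

theorem not_TCcover_two_sphere {V : Type*} [NormedAddCommGroup V] [InnerProductSpace ℝ V]
    [FiniteDimensional ℝ V] (hV : Odd (finrank ℝ V)) : ¬ TCcover (Metric.sphere (0 : V) 1) 2 := by
  rintro ⟨U, hU_open, hU_cover, hU⟩
  choose s hs hs_ends using hU
  obtain ⟨A, hA_cover, hA_closed, hAU⟩ :=
    exists_iUnion_eq_closed_subset hU_open (fun _ => toFinite _) hU_cover
  choose H hH hH_mem using fun i => exists_isPathFamily_of_motionPlanner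
    Metric.isClosed_sphere (hA_closed i) ((hs i).mono (hAU i)) fun p hp => hs_ends i p (hAU i hp)
  obtain ⟨⟨x, y⟩, hx, hy, t₀, ht₀, t₁, ht₁, hzero₀, hzero₁⟩ :=
    exists_common_zero_of_isPathFamily hV (hH 0) (hH 1)
  let p : Metric.sphere (0 : V) 1 × Metric.sphere (0 : V) 1 :=
    (⟨x, mem_sphere_zero_iff_norm.2 hx⟩, ⟨y, mem_sphere_zero_iff_norm.2 hy⟩)
  obtain ⟨i, hi⟩ := mem_iUnion.1 (hA_cover ▸ mem_univ p)
  have hne : ∀ t ∈ I, H i ((x, y), t) ≠ 0 := fun t ht h => by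
    simpa [p, h] using hH_mem i p hi t ht
  fin_cases i
  · exact hne t₀ ht₀ hzero₀
  · exact hne t₁ ht₁ hzero₁

end MotionPlanners

section CoverTransport

open Topology

lemma exists_continuousOn_extend {Y Z : Type*} [TopologicalSpace Y] [TopologicalSpace Z]
    {U : Set Y} {f : U → Z} (hf : Continuous f) (d : Y → Z) :
    ∃ s : Y → Z, ContinuousOn s U ∧ ∀ p : U, s p = f p := by
  refine ⟨Function.extend (↑) f d, ?_, Subtype.val_injective.extend_apply f d⟩
  rwa [continuousOn_iff_continuous_domRestrict, domRestrict_eq,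
    Function.extend_comp Subtype.val_injective]

lemma exists_motionPlanner_of_path_family {Y : Type*} [TopologicalSpace Y] {U : Set (Y × Y)}
    {γ : ∀ p : U, Path p.1.1 p.1.2} (hγ : Continuous ↿γ) :
    ∃ s : Y × Y → C(I, Y), ContinuousOn s U ∧ ∀ p ∈ U, s p 0 = p.1 ∧ s p 1 = p.2 := by
  let F : C(U × I, Y) := ⟨↿γ, hγ⟩
  obtain ⟨s, hs, hs_eq⟩ :=
    exists_continuousOn_extend F.curry.continuous fun p => ContinuousMap.const I p.1
  refine ⟨s, hs, fun p hp => ?_⟩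
  rw [hs_eq ⟨p, hp⟩]
  exact ⟨(γ ⟨p, hp⟩).source, (γ ⟨p, hp⟩).target⟩

lemma TCcover_of_homeomorph {Y Z : Type*} [TopologicalSpace Y] [TopologicalSpace Z] (h : Y ≃ₜ Z)
    {k : ℕ} (hY : TCcover Y k) : TCcover Z k := by
  obtain ⟨U, hU_open, hU_cover, hU⟩ := hY
  choose s hs hs_ends using hU
  let e := (h.prodCongr h).symm
  refine ⟨fun i => e ⁻¹' U i, fun i => (hU_open i).preimage e.continuous, ?_, fun i =>
    ⟨fun p => (h : C(Y, Z)).comp (s i (e p)), ?_, fun p hp => ?_⟩⟩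
  · rw [← preimage_iUnion, hU_cover, preimage_univ]
  · exact (ContinuousMap.continuous_postcomp _).comp_continuousOn
      ((hs i).comp e.continuous.continuousOn fun _ => id)
  · exact ⟨(congrArg h (hs_ends i _ hp).1).trans (h.apply_symm_apply _),
      (congrArg h (hs_ends i _ hp).2).trans (h.apply_symm_apply _)⟩

end CoverTransport

section FixedSet

variable {G X : Type*} {act : G → X → X}

lemma orbit_eq_singleton_of_mem_fixedSet [Nonempty G] {x : X} (hx : x ∈ fixedSet act) :
    orbit act x = {x} := by
  ext y
  simp [orbit, hx _, eq_comm]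

variable [TopologicalSpace X]

theorem TCcover_fixedSet_of_invTCcover [Nonempty G] {k : ℕ} (h : invTCcover act k) :
    TCcover (fixedSet act) k := by
  obtain ⟨U, hU_open, hU_cover, hU⟩ := h
  choose _ s₁ s₂ hs₁ hs₂ hs_ends hs_equiv using hU
  let ι : fixedSet act × fixedSet act → X × X := Prod.map (↑) (↑)
  have hι : Continuous ι := by fun_prop
  refine ⟨fun i => ι ⁻¹' U i, fun i => (hU_open i).preimage hι, ?_, fun i => ?_⟩
  · rw [← preimage_iUnion, hU_cover, preimage_univ]
  have hfixed : ∀ p : ι ⁻¹' U i, ∀ t,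
      s₁ i (ι p) t ∈ fixedSet act ∧ s₂ i (ι p) t ∈ fixedSet act := fun p t => by
    have hequiv := fun g => hs_equiv i g g (ι p) p.2 t
    simp only [show ∀ g, (act g (ι p).1, act g (ι p).2) = ι p from
      fun g => Prod.ext (p.1.1.2 g) (p.1.2.2 g)] at hequiv
    exact ⟨fun g => (hequiv g).1.symm, fun g => (hequiv g).2.symm⟩
  have hmid : ∀ p : ι ⁻¹' U i, s₁ i (ι p) 1 = s₂ i (ι p) 0 := fun p => by
    have horbit := (hs_ends i (ι p) p.2).2.2
    rwa [orbit_eq_singleton_of_mem_fixedSet (hfixed p 1).1,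
      orbit_eq_singleton_of_mem_fixedSet (hfixed p 0).2, singleton_eq_singleton_iff] at horbit
  let mid : ι ⁻¹' U i → fixedSet act := fun p => ⟨s₁ i (ι p) 1, (hfixed p 1).1⟩
  let γ₁ : ∀ p : ι ⁻¹' U i, Path p.1.1 (mid p) := fun p =>
    { toFun := fun t => ⟨s₁ i (ι p) t, (hfixed p t).1⟩
      source' := Subtype.ext (hs_ends i (ι p) p.2).1
      target' := rfl }
  let γ₂ : ∀ p : ι ⁻¹' U i, Path (mid p) p.1.2 := fun p =>
    { toFun := fun t => ⟨s₂ i (ι p) t, (hfixed p t).2⟩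
      source' := Subtype.ext (hmid p).symm
      target' := Subtype.ext (hs_ends i (ι p) p.2).2.1 }
  have heval : ∀ {s : X × X → C(I, X)}, ContinuousOn s (U i) →
      Continuous fun q : ι ⁻¹' U i × I => s (ι q.1) q.2 := fun {s} hs =>
    ContinuousMap.continuous_uncurry_of_continuous
      ⟨fun p : ι ⁻¹' U i => s (ι p), hs.comp_continuous (by fun_prop) fun p => p.2⟩
  have hγ₁ : Continuous ↿γ₁ := (heval (hs₁ i)).subtype_mk _
  have hγ₂ : Continuous ↿γ₂ := (heval (hs₂ i)).subtype_mk _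
  exact exists_motionPlanner_of_path_family (Path.trans_continuous_family γ₁ hγ₁ γ₂ hγ₂)

end FixedSet

section Compressible

open Topology

variable {G X : Type*} [TopologicalSpace X] {act : G → X → X}

lemma exists_paths_of_GCompressible_singleton {U : Set X} {a : X} (h : GCompressible act {a} U) :
    ∃ s : X → C(I, X), ContinuousOn s U ∧ (∀ x ∈ U, s x 0 = x ∧ s x 1 = a) ∧
      ∀ g, ∀ x ∈ U, ∀ t, s (act g x) t = act g (s x t) := by
  obtain ⟨hU_inv, H, hH, hH_zero, hH_equiv, hH_one⟩ := h
  let F : C(U × I, X) := ⟨fun q => H (q.1, q.2), hH.comp_continuous (by fun_prop) (by simp)⟩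
  obtain ⟨s, hs, hs_eq⟩ := exists_continuousOn_extend F.curry.continuous (ContinuousMap.const I)
  have hs_apply : ∀ x ∈ U, ∀ t, s x t = H (x, t) := fun x hx t =>
    DFunLike.congr_fun (hs_eq ⟨x, hx⟩) t
  refine ⟨s, hs, fun x hx => ⟨?_, ?_⟩, fun g x hx t => ?_⟩
  · rw [hs_apply x hx, hH_zero x hx]
  · rw [hs_apply x hx]
    exact hH_one x hx
  · rw [hs_apply x hx, hs_apply _ (hU_inv g x hx), hH_equiv g x hx]

theorem invTCcover_of_GCompressible {k : ℕ} {U : Fin k → Set X} {a : Fin k → X}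
    (hU_open : ∀ i, IsOpen (U i)) (hU_cover : ⋃ i, U i ×ˢ U i = univ)
    (hU : ∀ i, GCompressible act {a i} (U i)) : invTCcover act k := by
  choose s hs hs_ends hs_equiv using fun i => exists_paths_of_GCompressible_singleton (hU i)
  refine ⟨fun i => U i ×ˢ U i, fun i => (hU_open i).prod (hU_open i), hU_cover, fun i =>
    ⟨fun g₁ g₂ p hp => ⟨(hU i).1 g₁ _ hp.1, (hU i).1 g₂ _ hp.2⟩,
      fun p => s i p.1, fun p => (s i p.2).comp ⟨unitInterval.symm, by fun_prop⟩,
      (hs i).comp continuousOn_fst fun _ hp => hp.1, ?_, fun p hp => ⟨?_, ?_, ?_⟩,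
      fun g₁ g₂ p hp t => ⟨hs_equiv i g₁ _ hp.1 t, hs_equiv i g₂ _ hp.2 _⟩⟩⟩
  · exact (ContinuousMap.continuous_precomp _).comp_continuousOn
      ((hs i).comp continuousOn_snd fun _ hp => hp.2)
  · exact (hs_ends i _ hp.1).1
  · simp [(hs_ends i _ hp.2).1]
  · simp [(hs_ends i _ hp.1).2, (hs_ends i _ hp.2).2]

lemma iUnion_compl_singleton_prod_eq_univ {X ι : Type*} {b : ι → X} (hb : Function.Injective b)
    (hι : 2 < Nat.card ι) : ⋃ i, ({b i}ᶜ : Set X) ×ˢ {b i}ᶜ = univ := by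
  refine eq_univ_of_forall fun p => ?_
  by_contra hp
  have hrange : range b ⊆ {p.1, p.2} := by
    rintro _ ⟨i, rfl⟩
    by_contra hi
    simp only [mem_insert_iff, mem_singleton_iff, not_or] at hi
    exact hp (mem_iUnion.2 ⟨i, Ne.symm hi.1, Ne.symm hi.2⟩)
  have hcard := ncard_le_ncard hrange
  rw [ncard_range_of_injective hb] at hcard
  exact (hι.trans_le hcard).not_ge ((ncard_insert_le _ _).trans (by rw [ncard_singleton]))

end Compressible

section LinearSphere

open Topology Module

variable {n : ℕ} {G : Type*} [Monoid G]
  {ρ : G →* (EuclideanSpace ℝ (Fin (n + 1)) ≃ₗᵢ[ℝ] EuclideanSpace ℝ (Fin (n + 1)))}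

lemma coe_sphereAct (g : G) (x : Sph n) : (sphereAct ρ g x : EuclideanSpace ℝ _) = ρ g x := rfl

lemma sphereAct_ne_neg_of_mem_fixedSet {a x : Sph n} (ha : a ∈ fixedSet (sphereAct ρ)) (g : G)
    (hx : x ≠ -a) : sphereAct ρ g x ≠ -a := fun h =>
  hx <| Subtype.ext <| (ρ g).injective <| by
    rw [← coe_sphereAct, h, coe_neg_sphere, map_neg, ← coe_sphereAct, ha g]

-- The compression moves each point along the normalized segment towards `a`.
lemma GCompressible_compl_singleton_neg {a : Sph n} (ha : a ∈ fixedSet (sphereAct ρ)) :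
    GCompressible (sphereAct ρ) {a} {-a}ᶜ := by
  let line : Sph n × I → EuclideanSpace ℝ (Fin (n + 1)) := fun q =>
    (1 - (q.2 : ℝ)) • (q.1 : EuclideanSpace ℝ (Fin (n + 1))) + (q.2 : ℝ) • (a : EuclideanSpace ℝ _)
  have hline_ne : ∀ q ∈ ({-a}ᶜ : Set (Sph n)) ×ˢ (univ : Set I), line q ≠ 0 := fun q hq h =>
    hq.1 <| Subtype.ext <| eq_neg_iff_add_eq_zero.2 <| by
      rw [eq_neg_of_smul_add_smul_eq_zero (norm_eq_of_mem_sphere q.1) (norm_eq_of_mem_sphere a) h,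
        add_neg_cancel]
  have hline_equiv : ∀ g x t, line (sphereAct ρ g x, t) = ρ g (line (x, t)) := fun g x t => by
    have : ρ g a = a := congrArg Subtype.val (ha g)
    simp [line, coe_sphereAct, this]
  let f : ({-a}ᶜ : Set (Sph n)) ×ˢ (univ : Set I) → Sph n := fun q =>
    ⟨NormedSpace.normalize (line q),
      mem_sphere_zero_iff_norm.2 (NormedSpace.norm_normalize_eq_one_iff.2 (hline_ne q q.2))⟩
  have hf : Continuous f := by
    have : Continuous fun q : ({-a}ᶜ : Set (Sph n)) ×ˢ (univ : Set I) => line q := by fun_prop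
    exact ((this.norm.inv₀ fun q => norm_ne_zero_iff.2 (hline_ne q q.2)).smul this).subtype_mk _
  obtain ⟨H, hH, hH_eq⟩ := exists_continuousOn_extend hf Prod.fst
  replace hH_eq : ∀ x ≠ -a, ∀ t,
      (H (x, t) : EuclideanSpace ℝ (Fin (n + 1))) = NormedSpace.normalize (line (x, t)) :=
    fun x hx t => congrArg Subtype.val (hH_eq ⟨(x, t), hx, mem_univ t⟩)
  refine ⟨fun g x => sphereAct_ne_neg_of_mem_fixedSet ha g, H, hH, fun x hx => ?_,
    fun g x hx t => ?_, fun x hx => ?_⟩ <;> ext1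
  · simp [hH_eq x hx, line, NormedSpace.normalize_eq_self_of_norm_eq_one]
  · simp [hH_eq _ (sphereAct_ne_neg_of_mem_fixedSet ha g hx), hline_equiv, coe_sphereAct,
      hH_eq x hx, NormedSpace.normalize]
  · simp [hH_eq x hx, line, NormedSpace.normalize_eq_self_of_norm_eq_one]

theorem invTCcover_three_of_infinite_fixedSet [Infinite (fixedSet (sphereAct ρ))] :
    invTCcover (sphereAct ρ) 3 := by
  let b : Fin 3 ↪ fixedSet (sphereAct ρ) := Fin.valEmbedding.trans (Infinite.natEmbedding _)
  refine invTCcover_of_GCompressible (fun _ => isOpen_compl_singleton)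
    (iUnion_compl_singleton_prod_eq_univ (b := fun i => -(b i : Sph n)) ?_ (by simp))
    fun i => GCompressible_compl_singleton_neg (b i).2
  exact neg_injective.comp (Subtype.val_injective.comp b.injective)

/-- The unit sphere of a subspace is the part of the unit sphere lying in the subspace. -/
def sphereSubmoduleHomeomorph {E : Type*} [NormedAddCommGroup E] [NormedSpace ℝ E]
    (V : Submodule ℝ E) :
    Metric.sphere (0 : V) 1 ≃ₜ {x : Metric.sphere (0 : E) 1 | (x : E) ∈ V} where
  toFun v := ⟨⟨v.1, mem_sphere_zero_iff_norm.2 (mem_sphere_zero_iff_norm.1 v.2)⟩, v.1.2⟩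
  invFun x := ⟨⟨x.1, x.2⟩, mem_sphere_zero_iff_norm.2 (mem_sphere_zero_iff_norm.1 x.1.2)⟩
  left_inv _ := rfl
  right_inv _ := rfl
  continuous_toFun := by fun_prop
  continuous_invFun := by fun_prop

lemma infinite_sphere {E : Type*} [NormedAddCommGroup E] [NormedSpace ℝ E]
    (hE : 1 < Module.rank ℝ E) : Infinite (Metric.sphere (0 : E) 1) := by
  have : Nontrivial E := rank_pos_iff_nontrivial.1 (zero_lt_one.trans hE)
  obtain ⟨v, hv⟩ := NormedSpace.sphere_nonempty (x := (0 : E)) (r := 1) |>.2 zero_le_one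
  exact ((isPreconnected_sphere hE 0 1).infinite_of_nontrivial ⟨v, hv, -v, by simpa using hv,
    fun h => ne_neg_of_mem_sphere ℝ one_ne_zero ⟨v, hv⟩ (Subtype.ext h)⟩).to_subtype

end LinearSphere

section MinCover

lemma minCover_eq_succ {P : ℕ → Prop} {m : ℕ} (hm : P (m + 1))
    (hlt : ∀ j, 1 ≤ j → j ≤ m → ¬ P j) : minCover P = m + 1 := by
  refine le_antisymm (sInf_le ⟨m + 1, by simp, by simp, hm⟩) (le_sInf ?_)
  rintro _ ⟨j, rfl, hj, hPj⟩
  have : m < j := not_le.1 fun hjm => hlt j hj hjm hPj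
  exact_mod_cast this

lemma invTCcover_mono {G X : Type*} [TopologicalSpace X] {act : G → X → X} {j m : ℕ} (hj : 1 ≤ j)
    (hjm : j ≤ m) (h : invTCcover act j) : invTCcover act m := by
  obtain ⟨U, hU_open, hU_cover, hU⟩ := h
  have : Nonempty (Fin j) := ⟨⟨0, hj⟩⟩
  have hsurj : Function.Surjective (Function.invFun (Fin.castLE hjm)) :=
    Function.invFun_surjective (Fin.castLE_injective hjm)
  exact ⟨fun i => U (Function.invFun (Fin.castLE hjm) i), fun _ => hU_open _,
    (hsurj.iUnion_comp U).trans hU_cover, fun _ => hU _⟩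

end MinCover

theorem invTC_linear_sphere_eq_three_of_even_general {G : Type*} [Monoid G] {n k : ℕ} (hk : 0 < k)
    (ρ : G →* (EuclideanSpace ℝ (Fin (n + 1)) ≃ₗᵢ[ℝ] EuclideanSpace ℝ (Fin (n + 1))))
    (V : Submodule ℝ (EuclideanSpace ℝ (Fin (n + 1)))) (hV : Module.finrank ℝ V = k + 1)
    (hfix : fixedSet (sphereAct ρ) = {x : Sph n | (x : EuclideanSpace ℝ (Fin (n + 1))) ∈ V})
    (hkeven : Even k) : invTC (sphereAct ρ) = 3 := by
  let e : Metric.sphere (0 : V) 1 ≃ₜ fixedSet (sphereAct ρ) :=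
    (sphereSubmoduleHomeomorph V).trans (.setCongr hfix.symm)
  have hupper : invTCcover (sphereAct ρ) 3 := by
    have := infinite_sphere (E := V) (by
      rw [← Module.finrank_eq_rank, hV]
      exact_mod_cast Nat.succ_lt_succ hk)
    have := e.toEquiv.infinite_iff.1 this
    exact invTCcover_three_of_infinite_fixedSet
  have hlower : ¬ invTCcover (sphereAct ρ) 2 := fun h =>
    not_TCcover_two_sphere (hV ▸ hkeven.add_one)
      (TCcover_of_homeomorph e.symm (TCcover_fixedSet_of_invTCcover h))
  exact (minCover_eq_succ hupper fun j hj hj2 h => hlower (invTCcover_mono hj hj2 h)).trans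
    (by norm_num)

end PaperTC

/-- Let a finite group `G` act linearly on a `G`-connected sphere `S^n`
whose fixed point set is the great `k`-sphere obtained by intersecting `S^n` with a
pointwise-fixed linear subspace `V` of dimension `k + 1`, where `0 < k < n`.  If `k` is
even, then `TC^G(S^n) = 3`. -/
theorem invTC_linear_sphere_eq_three_of_even {G : Type*} [Group G] [Finite G]
    (n k : ℕ) (hk : 0 < k) (hkn : k < n)
    (ρ : G →* (EuclideanSpace ℝ (Fin (n + 1)) ≃ₗᵢ[ℝ] EuclideanSpace ℝ (Fin (n + 1))))
    (hconn : ∀ H : Subgroup G, IsPathConnected (fixedSetOf (sphereAct ρ) (H : Set G)))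
    (V : Submodule ℝ (EuclideanSpace ℝ (Fin (n + 1))))
    (hV : Module.finrank ℝ V = k + 1)
    (hVfix : ∀ g : G, ∀ v ∈ V, ρ g v = v)
    (hfixV : ∀ x : ↥(Sph n),
      (∀ g : G, sphereAct ρ g x = x) ↔ (x : EuclideanSpace ℝ (Fin (n + 1))) ∈ V)
    (hkeven : Even k) :
    invTC (sphereAct ρ) = 3 :=
  invTC_linear_sphere_eq_three_of_even_general hk ρ V hV (Set.ext hfixV) hkeven
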